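/- arXiv:1108.2801 — 2 statements merged into one kernel-verified Lean document; each statement's English description precedes it below -/
import Mathlib

section
/- Let P be an attracting petal for f (f maps P injectively into itself, all orbits in P converge to 0, and no point of P has an infinite backward orbit in P), and let C_A = P \ f(P) be the fundamental crescent. Then every point of P lies on the forward orbit of a unique point of C_A: every z ∈ P satisfies fⁿ(z₀) = z for some z₀ ∈ C_A and n ≥ 0, and distinct points of C_A have disjoint forward orbits. -/
/-!
Preimages of `z` can be followed backwards inside `P` until a point without preimage in `P`, that
is, a point of the crescent, is reached; otherwise they would form an infinite backward orbit. If
the orbits of two crescent points meet, injectivity cancels the common iterates, so that one of the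
two points is an iterate of the other; as it is not in `f(P)`, they are equal.
-/

section

variable {α : Type*} {f : α → α} {P Q : Set α} {z z₁ z₂ : α}

/-- The sequence `w` is an infinite backward orbit of `z` under `f` that stays in `P`. Since `f`
need not be invertible, it is a choice of successive preimages, indexed by the number of backward
steps. -/
def IsBackwardOrbit (f : α → α) (P : Set α) (z : α) (w : ℕ → α) : Prop :=
  w 0 = z ∧ (∀ n, w n ∈ P) ∧ ∀ n, f (w (n + 1)) = w n

theorem IsBackwardOrbit.mono {w : ℕ → α} (hw : IsBackwardOrbit f P z w) (hPQ : P ⊆ Q) :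
    IsBackwardOrbit f Q z w :=
  ⟨hw.1, fun n => hPQ (hw.2.1 n), hw.2.2⟩

theorem exists_isBackwardOrbit_of_surjOn (hP : Set.SurjOn f P P) (hz : z ∈ P) :
    ∃ w, IsBackwardOrbit f P z w := by
  have : Nonempty α := ⟨z⟩
  let g : α → α := Function.invFunOn f P
  have hg_maps : Set.MapsTo g P P := hP.mapsTo_invFunOn
  have hg_inv : Set.RightInvOn g f P := hP.rightInvOn_invFunOn
  have hg_mem : ∀ n, g^[n] z ∈ P := fun n => hg_maps.iterate n hz
  refine ⟨fun n => g^[n] z, rfl, hg_mem, fun n => ?_⟩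
  calc
    f (g^[n + 1] z) = f (g (g^[n] z)) := by rw [Function.iterate_succ_apply']
    _ = g^[n] z := hg_inv (hg_mem n)

/-- The fundamental crescent `P \ f(P)` of a set `P`: the points of `P` with no preimage in `P`. -/
def crescent (f : α → α) (P : Set α) : Set α :=
  P \ f '' P

theorem exists_mem_crescent_iterate_eq (hz : z ∈ P) (hback : ¬ ∃ w, IsBackwardOrbit f P z w) :
    ∃ z₀ ∈ crescent f P, ∃ n : ℕ, f^[n] z₀ = z := by
  by_contra! h_avoid
  let S : Set α := {x ∈ P | ∃ n : ℕ, f^[n] x = z}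
  have hS : Set.SurjOn f S S := by
    rintro x ⟨hx, n, hn⟩
    have hx_image : x ∈ f '' P := by
      by_contra hx_not
      exact h_avoid x ⟨hx, hx_not⟩ n hn
    obtain ⟨y, hy, rfl⟩ := hx_image
    exact ⟨y, ⟨hy, n + 1, hn⟩, rfl⟩
  obtain ⟨w, hw⟩ := exists_isBackwardOrbit_of_surjOn hS ⟨hz, 0, rfl⟩
  exact hback ⟨w, hw.mono (Set.sep_subset _ _)⟩

theorem iterate_succ_notMem_crescent (hmaps : Set.MapsTo f P P) (hz : z ∈ P) (n : ℕ) :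
    f^[n + 1] z ∉ crescent f P := by
  rw [Function.iterate_succ_apply']
  exact fun h => h.2 (Set.mem_image_of_mem f (hmaps.iterate n hz))

theorem eq_of_iterate_eq_of_mem_crescent (hinj : Set.InjOn f P) (hmaps : Set.MapsTo f P P)
    (h₁ : z₁ ∈ crescent f P) (h₂ : z₂ ∈ crescent f P) {m k : ℕ} (h : f^[m] z₁ = f^[k] z₂) :
    z₁ = z₂ := by
  wlog hmk : m ≤ k generalizing z₁ z₂ m k
  · exact (this h₂ h₁ h.symm (le_of_not_ge hmk)).symm
  obtain ⟨j, rfl⟩ := Nat.exists_eq_add_of_le hmk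
  have h_iterate : z₁ = f^[j] z₂ := by
    rw [Function.iterate_add_apply] at h
    exact hinj.iterate hmaps m h₁.1 (hmaps.iterate j h₂.1) h
  cases j with
  | zero => exact h_iterate
  | succ j => exact absurd (h_iterate ▸ h₁) (iterate_succ_notMem_crescent hmaps h₂.1 j)

theorem stmt16_general (hinj : Set.InjOn f P) (hmaps : Set.MapsTo f P P)
    (hback : ∀ z ∈ P, ¬ ∃ w, IsBackwardOrbit f P z w) :
    (∀ z ∈ P, ∃ z₀ ∈ crescent f P, ∃ n : ℕ, f^[n] z₀ = z) ∧
    (∀ z₁ ∈ crescent f P, ∀ z₂ ∈ crescent f P, z₁ ≠ z₂ →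
      ∀ m k : ℕ, f^[m] z₁ ≠ f^[k] z₂) :=
  ⟨fun z hz => exists_mem_crescent_iterate_eq hz (hback z hz),
    fun _ h₁ _ h₂ hne _ _ h => hne (eq_of_iterate_eq_of_mem_crescent hinj hmaps h₁ h₂ h)⟩

end

/-- Fundamental crescent: if `f` is injective on an attracting petal `P`, maps
`P` into itself, all orbits in `P` converge to `0`, and no point of `P` has an
infinite backward orbit in `P`, then every point of `P` lies on the forward
orbit of a point of the crescent `C = P \ f(P)`, and distinct points of `C` have
disjoint forward orbits. -/
theorem stmt16 (f : ℂ → ℂ) (P : Set ℂ)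
    (hinj : Set.InjOn f P) (hmaps : Set.MapsTo f P P)
    (hconv : ∀ z ∈ P, Filter.Tendsto (fun n => f^[n] z) Filter.atTop (nhds 0))
    (hback : ∀ z ∈ P,
      ¬ ∃ w : ℕ → ℂ, w 0 = z ∧ (∀ n, w n ∈ P) ∧ ∀ n, f (w (n + 1)) = w n) :
    (∀ z ∈ P, ∃ z₀ ∈ P \ (f '' P), ∃ n : ℕ, f^[n] z₀ = z) ∧
    (∀ z₁ ∈ P \ (f '' P), ∀ z₂ ∈ P \ (f '' P), z₁ ≠ z₂ →
      ∀ m k : ℕ, f^[m] z₁ ≠ f^[k] z₂) :=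
  stmt16_general hinj hmaps hback
end

section
/- Let φ₁ and φ₂ be two attracting Fatou coordinates on an attracting petal P of a simple parabolic germ f (i.e., univalent analytic functions with φᵢ(f(z)) = φᵢ(z) + 1 on P, each inducing a conformal isomorphism of the orbit-space cylinder with ℂ/ℤ). Then φ₂ - φ₁ is constant on P. -/
/-! If `φ₁ z` and `φ₁ z'` differ by an integer, then `z` and `z'` lie on one orbit of `f`, so `φ₂ z`
and `φ₂ z'` differ by the same integer. The integer translates of `φ₁(P)` cover `ℂ`, hence
`φ₁ z ↦ φ₂ z` extends to an injective entire function `H` with `H (w + 1) = H w + 1`.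

An injective entire function is affine: `w / (H w - H 0)` extends to an entire function without
zeros, and it grows at most linearly because `H` maps the unit ball onto a neighbourhood of `H 0`
and therefore stays away from `H 0` outside that ball. So it is affine without zeros, i.e. constant.
The translation relation then forces `H` to have slope `1`. -/

open Filter Metric Set Topology

section InjectiveHolomorphic

variable {f : ℂ → ℂ} {U : Set ℂ} {a z : ℂ}

lemma not_eventually_eq_of_injOn {X Y : Type*} [TopologicalSpace X] {f : X → Y} {U : Set X} {x : X}
    [(𝓝[≠] x).NeBot] (hU : U ∈ 𝓝 x) (hinj : InjOn f U) : ¬∀ᶠ y in 𝓝 x, f y = f x := by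
  intro hconst
  have hne : ∀ᶠ y in 𝓝[≠] x, y ≠ x := self_mem_nhdsWithin
  obtain ⟨y, ⟨hy, hyU⟩, hyx⟩ :=
    (((hconst.and hU).filter_mono nhdsWithin_le_nhds).and hne).exists
  exact hyx (hinj hyU (mem_of_mem_nhds hU) hy)

lemma nhds_le_map_nhds_of_injOn (hU : U ∈ 𝓝 z) (hf : AnalyticAt ℂ f z) (hinj : InjOn f U) :
    𝓝 (f z) ≤ map f (𝓝 z) :=
  hf.eventually_constant_or_nhds_le_map_nhds.resolve_left (not_eventually_eq_of_injOn hU hinj)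

lemma eventually_deriv_ne_zero_of_injOn (hU : U ∈ 𝓝 z) (hf : AnalyticAt ℂ f z)
    (hinj : InjOn f U) : ∀ᶠ y in 𝓝[≠] z, deriv f y ≠ 0 := by
  refine hf.deriv.eventually_eq_zero_or_eventually_ne_zero.resolve_left fun hzero => ?_
  have horder : analyticOrderAt (f · - f z) z = ⊤ := by
    rw [← hf.analyticOrderAt_deriv_add_one, analyticOrderAt_eq_top.2 hzero, top_add]
  exact not_eventually_eq_of_injOn hU hinj
    ((analyticOrderAt_eq_top.1 horder).mono fun _ => sub_eq_zero.1)

lemma differentiableAt_of_leftInvOn {g : ℂ → ℂ} (hU : IsOpen U) (hf : DifferentiableOn ℂ f U)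
    (hg : LeftInvOn g f U) (hz : z ∈ U) : DifferentiableAt ℂ g (f z) := by
  have hanalytic : ∀ y ∈ U, AnalyticAt ℂ f y := fun y hy => hf.analyticAt (hU.mem_nhds hy)
  have hcomp : ∀ y ∈ U, g ∘ f =ᶠ[𝓝 y] id := fun y hy => hg.eqOn.eventuallyEq_of_mem (hU.mem_nhds hy)
  have hopen : 𝓝 (f z) ≤ map f (𝓝 z) :=
    nhds_le_map_nhds_of_injOn (hU.mem_nhds hz) (hanalytic z hz) hg.injOn
  have hcont : ContinuousAt g (f z) := by
    refine Tendsto.mono_left (tendsto_map'_iff.2 ?_) hopen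
    rw [hg hz]
    exact tendsto_id.congr' (hcomp z hz).symm
  have hregular : ∀ y ∈ U, deriv f y ≠ 0 → DifferentiableAt ℂ g (f y) := fun y hy hderiv =>
    ((analyticAt_comp_iff_of_deriv_ne_zero (hanalytic y hy) hderiv).1
      (analyticAt_id.congr (hcomp y hy).symm)).differentiableAt
  have hpunctured : ∀ᶠ w in 𝓝[≠] f z, DifferentiableAt ℂ g w := by
    have hderiv := eventually_deriv_ne_zero_of_injOn (hU.mem_nhds hz) (hanalytic z hz) hg.injOn
    rw [eventually_nhdsWithin_iff] at hderiv ⊢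
    refine hopen (mem_map.2 ?_)
    filter_upwards [hderiv, hU.mem_nhds hz] with y hy hyU hne
    exact hregular y hyU (hy fun h => hne (congrArg f h))
  exact (Complex.analyticAt_of_differentiable_on_punctured_nhds_of_continuousAt hpunctured
    hcont).differentiableAt

lemma deriv_ne_zero_of_injOn (hU : IsOpen U) (hf : DifferentiableOn ℂ f U) (hinj : InjOn f U)
    (hz : z ∈ U) : deriv f z ≠ 0 := by
  have hleft : LeftInvOn (Function.invFunOn f U) f U := hinj.leftInvOn_invFunOn
  have hinv : DifferentiableAt ℂ (Function.invFunOn f U) (f z) :=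
    differentiableAt_of_leftInvOn hU hf hleft hz
  have hchain : deriv (Function.invFunOn f U) (f z) * deriv f z = 1 := by
    rw [← deriv_comp z hinv (hf.differentiableAt (hU.mem_nhds hz)),
      (hleft.eqOn.eventuallyEq_of_mem (hU.mem_nhds hz)).deriv_eq, deriv_id]
  exact right_ne_zero_of_mul_eq_one hchain

lemma dslope_ne_zero_of_injOn (hU : IsOpen U) (hf : DifferentiableOn ℂ f U) (hinj : InjOn f U)
    (ha : a ∈ U) (hz : z ∈ U) : dslope f a z ≠ 0 := by
  rcases eq_or_ne z a with rfl | hne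
  · rw [dslope_same]
    exact deriv_ne_zero_of_injOn hU hf hinj hz
  · rw [dslope_of_ne f hne, slope_def_field]
    exact div_ne_zero (sub_ne_zero.2 (hinj.ne hz ha hne)) (sub_ne_zero.2 hne)

end InjectiveHolomorphic

section EntireFunctions

lemma eq_add_smul_deriv_of_norm_le_mul_one_add_norm {F : Type*} [NormedAddCommGroup F]
    [NormedSpace ℂ F] [CompleteSpace F] {g : ℂ → F} (hg : Differentiable ℂ g) {C : ℝ}
    (hC : ∀ z, ‖g z‖ ≤ C * (1 + ‖z‖)) (z : ℂ) : g z = g 0 + z • deriv g 0 := by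
  have hC0 : 0 ≤ C := by simpa using (norm_nonneg _).trans (hC 0)
  have hbound : ∀ z, ‖deriv g z‖ ≤ 2 * C := by
    intro z
    have hR : 0 < 1 + ‖z‖ := by positivity
    have hsphere : ∀ w ∈ sphere z (1 + ‖z‖), ‖g w‖ ≤ 2 * C * (1 + ‖z‖) := by
      intro w hw
      have hw' : ‖w‖ ≤ 1 + 2 * ‖z‖ := by
        linarith [norm_le_norm_add_norm_sub' w z, mem_sphere_iff_norm.1 hw]
      calc ‖g w‖ ≤ C * (1 + ‖w‖) := hC w
        _ ≤ C * (2 * (1 + ‖z‖)) := by gcongr; linarith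
        _ = 2 * C * (1 + ‖z‖) := by ring
    calc ‖deriv g z‖ ≤ 2 * C * (1 + ‖z‖) / (1 + ‖z‖) :=
          Complex.norm_deriv_le_of_forall_mem_sphere_norm_le hR hg.diffContOnCl hsphere
      _ = 2 * C := mul_div_cancel_right₀ _ hR.ne'
  have hderiv : ∀ w, deriv g w = deriv g 0 := fun w =>
    hg.deriv.apply_eq_apply_of_bounded
      (isBounded_iff_forall_norm_le.2 ⟨2 * C, forall_mem_range.2 hbound⟩) w 0
  have hremainder : ∀ w, HasDerivAt (fun w => g w - w • deriv g 0) 0 w := fun w => by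
    simpa [hderiv w] using (hg w).hasDerivAt.fun_sub ((hasDerivAt_id w).smul_const (deriv g 0))
  have hconst := is_const_of_deriv_eq_zero (fun w => (hremainder w).differentiableAt)
    (fun w => (hremainder w).deriv) z 0
  rw [zero_smul, sub_zero] at hconst
  exact sub_eq_iff_eq_add.1 hconst

lemma eq_apply_zero_of_ne_zero_of_norm_le_mul_one_add_norm {g : ℂ → ℂ} (hg : Differentiable ℂ g)
    (hne : ∀ z, g z ≠ 0) {C : ℝ} (hC : ∀ z, ‖g z‖ ≤ C * (1 + ‖z‖)) (z : ℂ) : g z = g 0 := by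
  have haffine := eq_add_smul_deriv_of_norm_le_mul_one_add_norm hg hC
  have hslope : deriv g 0 = 0 := by
    by_contra hslope
    apply hne (-g 0 / deriv g 0)
    rw [haffine, smul_eq_mul, div_mul_cancel₀ _ hslope, add_neg_cancel]
  rw [haffine z, hslope, smul_zero, add_zero]

variable {H : ℂ → ℂ}

lemma exists_pos_forall_one_le_norm_le_norm_sub_of_injective (hH : Differentiable ℂ H)
    (hinj : Function.Injective H) : ∃ δ > 0, ∀ w, 1 ≤ ‖w‖ → δ ≤ ‖H w - H 0‖ := by
  have himage : H '' ball 0 1 ∈ 𝓝 (H 0) :=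
    nhds_le_map_nhds_of_injOn univ_mem (hH.analyticAt 0) hinj.injOn
      (image_mem_map (ball_mem_nhds 0 one_pos))
  obtain ⟨δ, hδ, hball⟩ := Metric.mem_nhds_iff.1 himage
  refine ⟨δ, hδ, fun w hw => not_lt.1 fun hlt => ?_⟩
  have hmem : w ∈ ball (0 : ℂ) 1 := hinj.mem_set_image.1 (hball (mem_ball_iff_norm.2 hlt))
  exact hw.not_gt (mem_ball_zero_iff.1 hmem)

lemma differentiable_inv_dslope_of_injective (hH : Differentiable ℂ H)
    (hinj : Function.Injective H) (a : ℂ) : Differentiable ℂ fun w => (dslope H a w)⁻¹ := by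
  have hdslope : Differentiable ℂ (dslope H a) :=
    differentiableOn_univ.1 ((Complex.differentiableOn_dslope univ_mem).2 hH.differentiableOn)
  exact hdslope.inv fun w => dslope_ne_zero_of_injOn isOpen_univ hH.differentiableOn hinj.injOn
    (mem_univ a) (mem_univ w)

lemma exists_norm_inv_dslope_le_of_injective (hH : Differentiable ℂ H)
    (hinj : Function.Injective H) : ∃ C, ∀ w, ‖(dslope H 0 w)⁻¹‖ ≤ C * (1 + ‖w‖) := by
  obtain ⟨δ, hδ, hfar⟩ := exists_pos_forall_one_le_norm_le_norm_sub_of_injective hH hinj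
  have hcont := (differentiable_inv_dslope_of_injective hH hinj 0).continuous
  obtain ⟨M, hM⟩ := (isCompact_closedBall (0 : ℂ) 1).exists_bound_of_continuousOn hcont.continuousOn
  refine ⟨max M δ⁻¹, fun w => ?_⟩
  have hmax : 0 ≤ max M δ⁻¹ := le_max_of_le_right (inv_nonneg.2 hδ.le)
  rcases le_total ‖w‖ 1 with hw | hw
  · calc ‖(dslope H 0 w)⁻¹‖ ≤ max M δ⁻¹ := le_max_of_le_left (hM w (mem_closedBall_zero_iff.2 hw))
      _ ≤ max M δ⁻¹ * (1 + ‖w‖) := le_mul_of_one_le_right hmax (by simp)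
  · have hw0 : w ≠ 0 := norm_pos_iff.1 (one_pos.trans_le hw)
    calc ‖(dslope H 0 w)⁻¹‖ = ‖H w - H 0‖⁻¹ * ‖w‖ := by
          rw [dslope_of_ne H hw0, slope_def_field, sub_zero, inv_div, norm_div, div_eq_inv_mul]
      _ ≤ max M δ⁻¹ * (1 + ‖w‖) := by
          gcongr
          · exact le_max_of_le_right (inv_anti₀ hδ (hfar w hw))
          · linarith

theorem eq_add_mul_deriv_of_injective (hH : Differentiable ℂ H) (hinj : Function.Injective H)
    (w : ℂ) : H w = H 0 + w * deriv H 0 := by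
  have hne : ∀ w, (dslope H 0 w)⁻¹ ≠ 0 := fun w => inv_ne_zero <|
    dslope_ne_zero_of_injOn isOpen_univ hH.differentiableOn hinj.injOn (mem_univ 0) (mem_univ w)
  obtain ⟨C, hC⟩ := exists_norm_inv_dslope_le_of_injective hH hinj
  have hconst : dslope H 0 w = deriv H 0 := by
    rw [← dslope_same H 0]
    exact inv_injective (eq_apply_zero_of_ne_zero_of_norm_le_mul_one_add_norm
      (differentiable_inv_dslope_of_injective hH hinj 0) hne hC w)
  have hsub := sub_smul_dslope H 0 w
  rw [sub_zero, hconst, smul_eq_mul] at hsub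
  exact (add_eq_of_eq_sub' hsub).symm

lemma eq_add_of_injective_of_map_add_one (hH : Differentiable ℂ H) (hinj : Function.Injective H)
    (hper : ∀ w, H (w + 1) = H w + 1) (w : ℂ) : H w = w + H 0 := by
  have haffine := eq_add_mul_deriv_of_injective hH hinj
  have hslope : deriv H 0 = 1 := by
    have hone := haffine (0 + 1)
    rw [hper, zero_add, one_mul] at hone
    exact (add_left_cancel hone).symm
  rw [haffine w, hslope, mul_one, add_comm]

end EntireFunctions

section AbelEquation

variable {α M N : Type*} {f : α → α} {s : Set α} {z z' : α}

lemma map_iterate_eq_add_natCast [AddMonoidWithOne M] {φ : α → M} (hf : MapsTo f s s)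
    (hφ : ∀ z ∈ s, φ (f z) = φ z + 1) (hz : z ∈ s) (n : ℕ) : φ (f^[n] z) = φ z + n := by
  induction n with
  | zero => simp
  | succ n ih =>
    rw [Function.iterate_succ_apply', hφ _ (hf.iterate n hz), ih, Nat.cast_succ, add_assoc]

variable [AddGroupWithOne M] [AddGroupWithOne N] {φ : α → M} {ψ : α → N}

lemma eq_add_natCast_of_eq_add_natCast (hf : MapsTo f s s) (hφinj : InjOn φ s)
    (hφ : ∀ z ∈ s, φ (f z) = φ z + 1) (hψ : ∀ z ∈ s, ψ (f z) = ψ z + 1) (hz : z ∈ s)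
    (hz' : z' ∈ s) {n : ℕ} (h : φ z = φ z' + n) : ψ z = ψ z' + n := by
  have horbit : f^[n] z' = z :=
    hφinj (hf.iterate n hz') hz ((map_iterate_eq_add_natCast hf hφ hz' n).trans h.symm)
  rw [← horbit, map_iterate_eq_add_natCast hf hψ hz' n]

lemma eq_add_intCast_of_eq_add_intCast (hf : MapsTo f s s) (hφinj : InjOn φ s)
    (hφ : ∀ z ∈ s, φ (f z) = φ z + 1) (hψ : ∀ z ∈ s, ψ (f z) = ψ z + 1) (hz : z ∈ s)
    (hz' : z' ∈ s) {n : ℤ} (h : φ z = φ z' + n) : ψ z = ψ z' + n := by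
  obtain ⟨n, rfl | rfl⟩ := n.eq_nat_or_neg
  · rw [Int.cast_natCast] at h ⊢
    exact eq_add_natCast_of_eq_add_natCast hf hφinj hφ hψ hz hz' h
  · rw [Int.cast_neg, Int.cast_natCast, eq_add_neg_iff_add_eq] at h ⊢
    exact (eq_add_natCast_of_eq_add_natCast hf hφinj hφ hψ hz' hz h.symm).symm

end AbelEquation

section IntegerTranslates

variable {α M N : Type*} [AddCommGroupWithOne M] [AddCommGroupWithOne N] {φ : α → M} {ψ : α → N}
  {s : Set α}

lemma exists_map_add_intCast (hcover : ∀ w, ∃ z ∈ s, ∃ n : ℤ, w = φ z + n)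
    (hφψ : ∀ z ∈ s, ∀ z' ∈ s, ∀ n : ℤ, φ z = φ z' + n → ψ z = ψ z' + n) :
    ∃ H : M → N, ∀ z ∈ s, ∀ n : ℤ, H (φ z + n) = ψ z + n := by
  choose ζ hζ m hm using hcover
  refine ⟨fun w => ψ (ζ w) + m w, fun z hz n => ?_⟩
  have hφ : φ (ζ (φ z + n)) = φ z + (n - m (φ z + n) : ℤ) := by
    rw [Int.cast_sub, ← add_sub_assoc]
    exact eq_sub_of_add_eq (hm _).symm
  have hψ := hφψ _ (hζ _) z hz _ hφ
  rw [Int.cast_sub, ← add_sub_assoc] at hψ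
  exact add_eq_of_eq_sub hψ

lemma injective_of_map_add_intCast {H : M → N} (hcover : ∀ w, ∃ z ∈ s, ∃ n : ℤ, w = φ z + n)
    (hψφ : ∀ z ∈ s, ∀ z' ∈ s, ∀ n : ℤ, ψ z = ψ z' + n → φ z = φ z' + n)
    (hH : ∀ z ∈ s, ∀ n : ℤ, H (φ z + n) = ψ z + n) : Function.Injective H := by
  intro w w' hww'
  obtain ⟨z, hz, n, rfl⟩ := hcover w
  obtain ⟨z', hz', n', rfl⟩ := hcover w'
  rw [hH z hz, hH z' hz'] at hww'
  have hψ : ψ z = ψ z' + (n' - n : ℤ) := by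
    rw [Int.cast_sub, ← add_sub_assoc]
    exact eq_sub_of_add_eq hww'
  have hφ := hψφ z hz z' hz' _ hψ
  rw [Int.cast_sub, ← add_sub_assoc] at hφ
  exact add_eq_of_eq_sub hφ

lemma map_add_one_of_map_add_intCast {H : M → N} (hcover : ∀ w, ∃ z ∈ s, ∃ n : ℤ, w = φ z + n)
    (hH : ∀ z ∈ s, ∀ n : ℤ, H (φ z + n) = ψ z + n) (w : M) : H (w + 1) = H w + 1 := by
  obtain ⟨z, hz, n, rfl⟩ := hcover w
  rw [hH z hz, add_assoc, add_assoc]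
  exact_mod_cast hH z hz (n + 1)

lemma differentiable_of_map_add_intCast {φ ψ H : ℂ → ℂ} {U : Set ℂ} (hU : IsOpen U)
    (hφ : DifferentiableOn ℂ φ U) (hψ : DifferentiableOn ℂ ψ U) (hφinj : InjOn φ U)
    (hcover : ∀ w, ∃ z ∈ U, ∃ n : ℤ, w = φ z + n)
    (hH : ∀ z ∈ U, ∀ n : ℤ, H (φ z + n) = ψ z + n) : Differentiable ℂ H := by
  intro w
  obtain ⟨z, hz, n, rfl⟩ := hcover w
  have hUz : U ∈ 𝓝 z := hU.mem_nhds hz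
  have hanalytic : AnalyticAt ℂ (fun y => φ y + n) z :=
    (hφ.analyticAt hUz).add analyticAt_const
  have hderiv : deriv (fun y => φ y + n) z ≠ 0 := by
    rw [deriv_add_const]
    exact deriv_ne_zero_of_injOn hU hφ hφinj hz
  have hcomp : AnalyticAt ℂ (H ∘ fun y => φ y + n) z :=
    ((hψ.analyticAt hUz).add analyticAt_const).congr
      (eventually_of_mem hUz fun y hy => (hH y hy n).symm)
  exact ((analyticAt_comp_iff_of_deriv_ne_zero hanalytic hderiv).1 hcomp).differentiableAt

lemma exists_int_eq_add_of_exp_two_pi_I_mul_eq {a b : ℂ}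
    (h : Complex.exp (2 * Real.pi * Complex.I * a) = Complex.exp (2 * Real.pi * Complex.I * b)) :
    ∃ n : ℤ, a = b + n := by
  obtain ⟨n, hn⟩ := Complex.exp_eq_exp_iff_exists_int.1 h
  exact ⟨n, mul_left_cancel₀ Complex.two_pi_I_ne_zero (by linear_combination hn)⟩

end IntegerTranslates

/-- `φ` is a Fatou coordinate for `f` on the petal `P`: a univalent analytic function on `P` solving
the Abel equation. If `f` maps `P` into itself, the fields make the induced map from orbits to the
cylinder `ℂ/ℤ` well defined and injective; its surjectivity is not part of the structure. -/
structure IsFatouCoordinate (f : ℂ → ℂ) (P : Set ℂ) (φ : ℂ → ℂ) : Prop where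
  differentiableOn : DifferentiableOn ℂ φ P
  injOn : InjOn φ P
  map_apply : ∀ z ∈ P, φ (f z) = φ z + 1

lemma IsFatouCoordinate.exists_entire_injective_extension {f φ₁ φ₂ : ℂ → ℂ} {P : Set ℂ}
    (hP : IsOpen P) (hf : MapsTo f P P) (h₁ : IsFatouCoordinate f P φ₁)
    (h₂ : IsFatouCoordinate f P φ₂) (hcover : ∀ w, ∃ z ∈ P, ∃ n : ℤ, w = φ₁ z + n) :
    ∃ H : ℂ → ℂ, Differentiable ℂ H ∧ Function.Injective H ∧ (∀ w, H (w + 1) = H w + 1) ∧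
      ∀ z ∈ P, H (φ₁ z) = φ₂ z := by
  have h₁₂ : ∀ z ∈ P, ∀ z' ∈ P, ∀ n : ℤ, φ₁ z = φ₁ z' + n → φ₂ z = φ₂ z' + n :=
    fun _ hz _ hz' _ =>
      eq_add_intCast_of_eq_add_intCast hf h₁.injOn h₁.map_apply h₂.map_apply hz hz'
  have h₂₁ : ∀ z ∈ P, ∀ z' ∈ P, ∀ n : ℤ, φ₂ z = φ₂ z' + n → φ₁ z = φ₁ z' + n :=
    fun _ hz _ hz' _ =>
      eq_add_intCast_of_eq_add_intCast hf h₂.injOn h₂.map_apply h₁.map_apply hz hz'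
  obtain ⟨H, hH⟩ := exists_map_add_intCast hcover h₁₂
  refine ⟨H, ?_, injective_of_map_add_intCast hcover h₂₁ hH,
    map_add_one_of_map_add_intCast hcover hH, fun z hz => ?_⟩
  · exact differentiable_of_map_add_intCast hP h₁.differentiableOn h₂.differentiableOn h₁.injOn
      hcover hH
  · simpa only [Int.cast_zero, add_zero] using hH z hz 0

theorem stmt17_general {f φ₁ φ₂ : ℂ → ℂ} {P : Set ℂ} (hP : IsOpen P) (hf : MapsTo f P P)
    (h₁ : IsFatouCoordinate f P φ₁) (h₂ : IsFatouCoordinate f P φ₂)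
    (hsurj : ∀ w : ℂ, w ≠ 0 → ∃ z ∈ P, Complex.exp (2 * Real.pi * Complex.I * φ₁ z) = w) :
    ∃ c : ℂ, ∀ z ∈ P, φ₂ z = φ₁ z + c := by
  have hcover : ∀ w, ∃ z ∈ P, ∃ n : ℤ, w = φ₁ z + n := fun w => by
    obtain ⟨z, hz, hexp⟩ := hsurj _ (Complex.exp_ne_zero (2 * Real.pi * Complex.I * w))
    exact ⟨z, hz, exists_int_eq_add_of_exp_two_pi_I_mul_eq hexp.symm⟩
  obtain ⟨H, hdiff, hinj, hper, hH⟩ := h₁.exists_entire_injective_extension hP hf h₂ hcover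
  refine ⟨H 0, fun z hz => ?_⟩
  rw [← hH z hz, eq_add_of_injective_of_map_add_one hdiff hinj hper]


/-- Uniqueness of Fatou coordinates: two attracting Fatou coordinates `φ₁, φ₂`
on an attracting petal `P` of a simple parabolic germ (univalent, satisfying the
Abel equation, each inducing a conformal isomorphism of the orbit cylinder with
`ℂ/ℤ`, i.e. `exp(2πi φᵢ)` is surjective onto `ℂ*` and identifies exactly the
orbit relation) differ by a constant. -/
theorem stmt17 (f φ₁ φ₂ : ℂ → ℂ) (P : Set ℂ)
    (hP : IsOpen P) (hPconn : IsConnected P)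
    (hmaps : Set.MapsTo f P P) (hfinj : Set.InjOn f P)
    (h1 : DifferentiableOn ℂ φ₁ P) (h2 : DifferentiableOn ℂ φ₂ P)
    (hinj1 : Set.InjOn φ₁ P) (hinj2 : Set.InjOn φ₂ P)
    (hA1 : ∀ z ∈ P, φ₁ (f z) = φ₁ z + 1) (hA2 : ∀ z ∈ P, φ₂ (f z) = φ₂ z + 1)
    (hsurj1 : ∀ w : ℂ, w ≠ 0 →
      ∃ z ∈ P, Complex.exp (2 * Real.pi * Complex.I * φ₁ z) = w)
    (hsurj2 : ∀ w : ℂ, w ≠ 0 →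
      ∃ z ∈ P, Complex.exp (2 * Real.pi * Complex.I * φ₂ z) = w)
    (horb1 : ∀ z₁ ∈ P, ∀ z₂ ∈ P,
      (Complex.exp (2 * Real.pi * Complex.I * φ₁ z₁) =
          Complex.exp (2 * Real.pi * Complex.I * φ₁ z₂) ↔
        ∃ n : ℕ, f^[n] z₁ = z₂ ∨ f^[n] z₂ = z₁))
    (horb2 : ∀ z₁ ∈ P, ∀ z₂ ∈ P,
      (Complex.exp (2 * Real.pi * Complex.I * φ₂ z₁) =
          Complex.exp (2 * Real.pi * Complex.I * φ₂ z₂) ↔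
        ∃ n : ℕ, f^[n] z₁ = z₂ ∨ f^[n] z₂ = z₁)) :
    ∃ c : ℂ, ∀ z ∈ P, φ₂ z = φ₁ z + c := by
  exact stmt17_general hP hmaps ⟨h1, hinj1, hA1⟩ ⟨h2, hinj2, hA2⟩ hsurj1
end
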